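/- Let d₁,…,d_l be integers and let α ∈ Φ^l be a (2d₁,…,2d_l)-regular function, homogeneous of degree −(d₁+⋯+d_l). Fix a partition {1,…,l} = I ⊔ J and write the component of degree n of α with respect to (I,J) (with weights d₁,…,d_l) as (α)_n = Σ_j α'_{−n,j}·α''_{n,j}, where α''_{n,j} ∈ Φ^{|J|} is a rational function of the J-variables homogeneous of degree n − Σ_{j∈J}d_j, and α'_{−n,j} is a rational function of the I-variables homogeneous of degree −n − Σ_{i∈I}d_i. Then the component of degree n of α with respect to the swapped partition (J,I) equals Σ_j (α''_{n,j})*·(α'_{−n,j})*, where for a homogeneous function β of the variables z_i, i ∈ S (S = J or S = I respectively), β* denotes (−1)^{Σ_{i∈S}d_i}·(∏_{i∈S} z_i^{−2d_i})·β with every z_i (i ∈ S) replaced by z_i⁻¹. -/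

import Mathlib

open scoped Classical

noncomputable section

namespace Griess

open MvPolynomial

variable {k : Type} [Field k]

/-- The field `k(z₁,…,z_l)` of rational functions over `k` in `l` variables. -/
abbrev RF (k : Type) [Field k] (l : ℕ) : Type := FractionRing (MvPolynomial (Fin l) k)

/-- The variable `zᵢ` as an element of the rational function field. -/
def zv {k : Type} [Field k] {l : ℕ} (i : Fin l) : RF k l :=
  algebraMap (MvPolynomial (Fin l) k) (RF k l) (MvPolynomial.X i)

/-- The space `Φ^l` of rational functions of the form
`p(z₁,…,z_l) · ∏_{i<j} (zᵢ - z_j)^{k_{ij}}`. -/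
def Phi (k : Type) [Field k] (l : ℕ) : Set (RF k l) :=
  { x | ∃ (p : MvPolynomial (Fin l) k) (e : Fin l → Fin l → ℤ),
      x = algebraMap (MvPolynomial (Fin l) k) (RF k l) p *
        ∏ i : Fin l, ∏ j : Fin l, (if i < j then (zv i - zv j) ^ e i j else 1) }

/-- `D` is the family of partial derivative operators `∂_{z₁},…,∂_{z_l}`:
a family of `k`-linear derivations with `D i (z j) = δ_{ij}`. -/
def IsPartialDeriv {l : ℕ} (D : Fin l → Derivation k (RF k l) (RF k l)) : Prop :=
  ∀ i j : Fin l, D i (zv j) = if j = i then 1 else 0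

/-- The operator `Δ = Σᵢ ∂_{zᵢ}`. -/
def Delta {l : ℕ} (D : Fin l → Derivation k (RF k l) (RF k l)) (α : RF k l) : RF k l :=
  ∑ i, D i α

/-- The operator `Δ*(n₁,…,n_l) = Σᵢ (zᵢ² ∂_{zᵢ} + nᵢ zᵢ)`. -/
def DeltaStar {l : ℕ} (D : Fin l → Derivation k (RF k l) (RF k l)) (n : Fin l → ℤ)
    (α : RF k l) : RF k l :=
  ∑ i, ((zv i) ^ 2 * D i α + (n i : RF k l) * zv i * α)

section Subst

variable {l : ℕ}

/-- The embedding of polynomials in `z₁,…,z_l` into rational functions of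
`z₁,…,z_l` and one extra variable `t` (`= RatFunc.X`). -/
def toRatFuncHom (k : Type) [Field k] (l : ℕ) :
    Polynomial (MvPolynomial (Fin l) k) →+* RatFunc (RF k l) :=
  (algebraMap (Polynomial (RF k l)) (RatFunc (RF k l))).comp
    (Polynomial.mapRingHom (algebraMap (MvPolynomial (Fin l) k) (RF k l)))

lemma toRatFuncHom_injective : Function.Injective (toRatFuncHom k l) := by
  have h1 : Function.Injective (algebraMap (Polynomial (RF k l)) (RatFunc (RF k l))) :=
    IsFractionRing.injective _ _
  have h2 : Function.Injective
      (Polynomial.mapRingHom (algebraMap (MvPolynomial (Fin l) k) (RF k l))) :=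
    Polynomial.map_injective _ (IsFractionRing.injective _ _)
  exact fun a b hab => h2 (h1 hab)

/-- Polynomial level substitution `z_j ↦ t·z_j` for `j ∈ J`. -/
def scaleAux (k : Type) [Field k] (l : ℕ) (J : Finset (Fin l)) :
    MvPolynomial (Fin l) k →+* Polynomial (MvPolynomial (Fin l) k) :=
  (MvPolynomial.aeval (R := k) fun i =>
    if i ∈ J then Polynomial.X * Polynomial.C (MvPolynomial.X i)
    else Polynomial.C (MvPolynomial.X i)).toRingHom

lemma scaleAux_injective (J : Finset (Fin l)) :
    Function.Injective (scaleAux k l J) := by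
  have h : (Polynomial.evalRingHom (1 : MvPolynomial (Fin l) k)).comp (scaleAux k l J)
      = RingHom.id _ := by
    apply MvPolynomial.ringHom_ext
    · intro r; simp [scaleAux]
    · intro i; by_cases hi : i ∈ J <;> simp [scaleAux, hi]
  intro p q hpq
  have hp := DFunLike.congr_fun h p
  have hq := DFunLike.congr_fun h q
  simp only [RingHom.comp_apply, RingHom.id_apply] at hp hq
  rw [← hp, ← hq, hpq]

/-- The substitution `z_j ↦ t·z_j` (for `j ∈ J`), as a map from rational functions
in `z₁,…,z_l` to rational functions in `z₁,…,z_l` and `t`.  Reading off the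
coefficients of the Laurent expansion in `t` at `t = 0` of `scaleJ J α` yields the
decomposition of `α` into its homogeneous components with respect to the total degree
in the variables `{z_j : j ∈ J}`, i.e. the expansion of `α` in the domain where the
variables of `J` are much smaller than the remaining variables. -/
def scaleJ (J : Finset (Fin l)) : RF k l →+* RatFunc (RF k l) :=
  IsFractionRing.lift (g := (toRatFuncHom k l).comp (scaleAux k l J))
    (fun a b hab => scaleAux_injective J (toRatFuncHom_injective hab))

/-- Polynomial level substitution `z_i ↦ z_j + t`. -/
def subPairAux (k : Type) [Field k] (l : ℕ) (i j : Fin l) :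
    MvPolynomial (Fin l) k →+* Polynomial (MvPolynomial (Fin l) k) :=
  (MvPolynomial.aeval (R := k) fun s =>
    if s = i then Polynomial.X + Polynomial.C (MvPolynomial.X j)
    else Polynomial.C (MvPolynomial.X s)).toRingHom

lemma subPairAux_injective (i j : Fin l) :
    Function.Injective (subPairAux k l i j) := by
  have h : (Polynomial.evalRingHom (MvPolynomial.X i - MvPolynomial.X j)).comp
      (subPairAux k l i j) = RingHom.id _ := by
    apply MvPolynomial.ringHom_ext
    · intro r; simp [subPairAux]
    · intro s; by_cases hs : s = i <;> simp [subPairAux, hs]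
  intro p q hpq
  have hp := DFunLike.congr_fun h p
  have hq := DFunLike.congr_fun h q
  simp only [RingHom.comp_apply, RingHom.id_apply] at hp hq
  rw [← hp, ← hq, hpq]

/-- The substitution `z_i ↦ z_j + t`, as a map from rational functions in `z₁,…,z_l`
to rational functions in the variables `z₁,…,z_l` and `t`.  Reading off the Laurent
coefficients in `t` at `t = 0` yields the expansion of a rational function in powers
of `z_i - z_j`, with coefficients not involving `z_i`. -/
def subPair (i j : Fin l) : RF k l →+* RatFunc (RF k l) :=
  IsFractionRing.lift (g := (toRatFuncHom k l).comp (subPairAux k l i j))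
    (fun a b hab => subPairAux_injective i j (toRatFuncHom_injective hab))

end Subst

/-- The coefficient of `tᵐ` in the Laurent expansion at `t = 0` of a rational
function of `t`. -/
def lcoeff {L : Type} [Field L] (m : ℤ) (f : RatFunc L) : L :=
  (f : LaurentSeries L).coeff m

/-- The component `(α)_n` of `α` of degree `n` with respect to the partition
`{1,…,l} = Jᶜ ⊔ J` and the weights `d`:  the part of the expansion of `α` in the
domain where the variables of `J` are much smaller than those of `Jᶜ` whose total
degree in the variables `{z_j : j ∈ J}` equals `n - Σ_{j∈J} d_j`. -/
def component {l : ℕ} (J : Finset (Fin l)) (d : Fin l → ℤ) (n : ℤ) (α : RF k l) :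
    RF k l :=
  lcoeff (n - ∑ j ∈ J, d j) (scaleJ J α)

/-- `α` is homogeneous of total degree `d` in the variables `{z_i : i ∈ S}`:
substituting `z_i ↦ t·z_i` for `i ∈ S` multiplies `α` by `t^d`. -/
def IsHomogeneousOn {l : ℕ} (S : Finset (Fin l)) (d : ℤ) (α : RF k l) : Prop :=
  scaleJ S α = RatFunc.X ^ d * RatFunc.C α

/-- `ρ^{(m)}_{ij} α`: the coefficient of `(z_i - z_j)^m` in the expansion of `α`
in powers of `z_i - z_j` (the coefficients do not involve `z_i`). -/
def rho {l : ℕ} (i j : Fin l) (m : ℤ) (α : RF k l) : RF k l :=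
  lcoeff m (subPair i j α)

/-- `α` is a rational function of the variables `{z_i : i ∈ S}` only. -/
def dependsOnlyOn {l : ℕ} (S : Finset (Fin l)) (α : RF k l) : Prop :=
  α ∈ Subfield.closure (Set.range (algebraMap k (RF k l)) ∪ {x | ∃ i ∈ S, x = zv i})

/-- `α` is an admissible function of the variables `{z_i : i ∈ S}` (the space
`R^{|S|}`):  `α ∈ Φ` is a rational function of the variables of `S` only, it is
`(4,…,4)`-regular and homogeneous of degree `-2|S|` in these variables, and all its
components of negative degree, as well as those of degree `1`, vanish (with respect
to every partition of `S` and all weights equal to `2`). -/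
def Admissible {l : ℕ} (D : Fin l → Derivation k (RF k l) (RF k l)) (S : Finset (Fin l))
    (α : RF k l) : Prop :=
  α ∈ Phi k l ∧ dependsOnlyOn S α ∧
    (∑ i ∈ S, ((zv i) ^ 2 * D i α + 4 * zv i * α)) = 0 ∧
    IsHomogeneousOn S (-(2 * (S.card : ℤ))) α ∧
    ∀ J ⊆ S, ∀ n : ℤ, (n < 0 ∨ n = 1) → component J (fun _ => 2) n α = 0

/-- `α` is an indecomposable admissible function of the variables `{z_i : i ∈ S}`
(the space `R₀^{|S|}`): admissible, and all the components `(α)₀` with respect to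
partitions of `S` into two nonempty parts vanish. -/
def AdmissibleInd {l : ℕ} (D : Fin l → Derivation k (RF k l) (RF k l))
    (S : Finset (Fin l)) (α : RF k l) : Prop :=
  Admissible D S α ∧
    ∀ J ⊆ S, J ≠ ∅ → J ≠ S → component J (fun _ => 2) 0 α = 0

section Shift

variable {l : ℕ}

/-- Polynomial level substitution `z_s ↦ z_s - z_t` for `s ∈ S`. -/
def shiftAuxP (k : Type) [Field k] (l : ℕ) (S : Finset (Fin l)) (t : Fin l) :
    MvPolynomial (Fin l) k →+* MvPolynomial (Fin l) k :=
  (MvPolynomial.aeval (R := k) fun s =>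
    if s ∈ S then MvPolynomial.X s - MvPolynomial.X t else MvPolynomial.X s).toRingHom

lemma shiftAuxP_injective (S : Finset (Fin l)) (t : Fin l) (ht : t ∉ S) :
    Function.Injective (shiftAuxP k l S t) := by
  have h : ((MvPolynomial.aeval (R := k) fun s =>
      if s ∈ S then MvPolynomial.X s + MvPolynomial.X t
      else MvPolynomial.X s).toRingHom).comp (shiftAuxP k l S t) = RingHom.id _ := by
    apply MvPolynomial.ringHom_ext
    · intro r; simp [shiftAuxP]
    · intro s
      by_cases hs : s ∈ S
      · have hst : s ≠ t := fun hst => ht (hst ▸ hs)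
        simp [shiftAuxP, hs, ht]
      · simp [shiftAuxP, hs]
  intro p q hpq
  have hp := DFunLike.congr_fun h p
  have hq := DFunLike.congr_fun h q
  simp only [RingHom.comp_apply, RingHom.id_apply] at hp hq
  rw [← hp, ← hq, hpq]

/-- The shift operator substituting `z_s - z_t` for `z_s`, for all `s ∈ S`. -/
def shiftT (S : Finset (Fin l)) (t : Fin l) (ht : t ∉ S) : RF k l →+* RF k l :=
  IsFractionRing.lift
    (g := (algebraMap (MvPolynomial (Fin l) k) (RF k l)).comp (shiftAuxP k l S t))
    (fun a b hab =>
      shiftAuxP_injective S t ht (IsFractionRing.injective _ _ hab))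

/-- The operator `ℰ = Σ_{s ∈ S} (-z_s⁻¹ ∂_{z_s} + 2 z_s⁻²)`. -/
def curlyE {l : ℕ} (D : Fin l → Derivation k (RF k l) (RF k l)) (S : Finset (Fin l))
    (β : RF k l) : RF k l :=
  ∑ s ∈ S, (-((zv s)⁻¹ * D s β) + 2 * (zv s) ^ (-2 : ℤ) * β)

end Shift

end Griess

namespace Griess

theorem aux_ext {k : Type} [Field k] {l : ℕ} {L : Type*} [CommRing L]
    (f g : RF k l →+* L) (hc : ∀ c : k, f (algebraMap k (RF k l) c) = g (algebraMap k (RF k l) c))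
    (hz : ∀ i, f (zv i) = g (zv i)) : f = g := by
  apply IsLocalization.ringHom_ext (nonZeroDivisors (MvPolynomial (Fin l) k))
  apply MvPolynomial.ringHom_ext
  · intro r
    have := hc r
    rw [IsScalarTower.algebraMap_apply k (MvPolynomial (Fin l) k) (RF k l)] at this
    simpa [MvPolynomial.algebraMap_eq] using this
  · intro i
    exact hz i

theorem aux_poly_ext {k : Type} [Field k] {l : ℕ} {L : Type*} [CommRing L]
    (f g : MvPolynomial (Fin l) k →+* L) (hc : ∀ c : k, f (MvPolynomial.C c) = g (MvPolynomial.C c))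
    (hz : ∀ i, f (MvPolynomial.X i) = g (MvPolynomial.X i)) (p : MvPolynomial (Fin l) k) : f p = g p := by
  rw [MvPolynomial.ringHom_ext hc hz]

theorem aux_algMap_C {k : Type} [Field k] {l : ℕ} (c : k) :
    algebraMap (MvPolynomial (Fin l) k) (RF k l) (MvPolynomial.C c) = algebraMap k (RF k l) c := by
  rw [IsScalarTower.algebraMap_apply k (MvPolynomial (Fin l) k) (RF k l), MvPolynomial.algebraMap_eq]

theorem aux_frac {k : Type} [Field k] {l : ℕ} (x : RF k l) :
    ∃ P Q : MvPolynomial (Fin l) k, algebraMap _ (RF k l) Q ≠ 0 ∧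
      x = algebraMap _ (RF k l) P / algebraMap _ (RF k l) Q := by
  obtain ⟨P, Q, hQ, h⟩ := IsFractionRing.div_surjective (A := MvPolynomial (Fin l) k) x
  exact ⟨P, Q, by simpa using nonZeroDivisors.ne_zero hQ, h.symm⟩

theorem zv_ne_zero {k : Type} [Field k] {l : ℕ} (i : Fin l) : (zv i : RF k l) ≠ 0 := by
  simp [zv]

theorem aux_induction {k : Type} [Field k] {l : ℕ} {p : RF k l → Prop}
    (hc : ∀ c : k, p (algebraMap k (RF k l) c)) (hz : ∀ i, p (zv i))
    (hadd : ∀ x y, p x → p y → p (x + y)) (hmul : ∀ x y, p x → p y → p (x * y))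
    (hinv : ∀ x, p x → p x⁻¹) (x : RF k l) : p x := by
  have hp : ∀ P : MvPolynomial (Fin l) k, p (algebraMap _ (RF k l) P) := by
    intro P
    induction P using MvPolynomial.induction_on with
    | C a => rw [aux_algMap_C]; exact hc a
    | add p q hp hq => rw [map_add]; exact hadd _ _ hp hq
    | mul_X p i hp => rw [map_mul]; exact hmul _ _ hp (hz i)
  obtain ⟨P, Q, -, rfl⟩ := aux_frac x
  rw [div_eq_mul_inv]
  exact hmul _ _ (hp P) (hinv _ (hp Q))

/-- affine substitution on polynomials -/
def affP (k : Type) [Field k] (l : ℕ) (a c : k) :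
    MvPolynomial (Fin l) k →+* MvPolynomial (Fin l) k :=
  (MvPolynomial.aeval (R := k) fun i =>
    MvPolynomial.C a * MvPolynomial.X i + MvPolynomial.C c).toRingHom

theorem affP_injective {k : Type} [Field k] {l : ℕ} (a c : k) (ha : a ≠ 0) :
    Function.Injective (affP k l a c) := by
  have h : (affP k l a⁻¹ (-(a⁻¹ * c))).comp (affP k l a c) = RingHom.id _ := by
    apply MvPolynomial.ringHom_ext
    · intro r; simp [affP]
    · intro i
      simp only [affP, AlgHom.toRingHom_eq_coe, RingHom.coe_comp, RingHom.coe_coe,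
        Function.comp_apply, MvPolynomial.aeval_X, map_add, map_mul, RingHom.id_apply,
        MvPolynomial.algHom_C, MvPolynomial.algebraMap_eq]
      rw [mul_add, ← mul_assoc, ← map_mul, mul_inv_cancel₀ ha, ← map_mul]
      have : a * -(a⁻¹ * c) = -c := by field_simp
      rw [this]; simp
  intro p q hpq
  have hp := DFunLike.congr_fun h p
  have hq := DFunLike.congr_fun h q
  simp only [RingHom.comp_apply, RingHom.id_apply] at hp hq
  rw [← hp, ← hq, hpq]

/-- affine substitution on rational functions -/
theorem exists_aff {k : Type} [Field k] (l : ℕ) (a c : k) (ha : a ≠ 0) :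
    ∃ τ : RF k l →+* RF k l, (∀ r, τ (algebraMap k _ r) = algebraMap k _ r) ∧
      ∀ i, τ (zv i) = algebraMap k _ a * zv i + algebraMap k _ c := by
  have hinj : Function.Injective
      ((algebraMap (MvPolynomial (Fin l) k) (RF k l)).comp (affP k l a c)) :=
    fun x y hxy => affP_injective a c ha (IsFractionRing.injective _ _ hxy)
  have hl : ∀ p, IsFractionRing.lift (K := RF k l) hinj (algebraMap _ _ p) =
      algebraMap (MvPolynomial (Fin l) k) (RF k l) (affP k l a c p) :=
    fun p => IsFractionRing.lift_algebraMap hinj p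
  refine ⟨IsFractionRing.lift hinj, ?_, ?_⟩
  · intro r
    rw [← aux_algMap_C, hl]
    simp [affP, MvPolynomial.algebraMap_eq]
  · intro i
    rw [zv, hl]
    simp [affP, ← aux_algMap_C]

theorem scaleJ_alg {k : Type} [Field k] {l : ℕ} (J : Finset (Fin l)) (p : MvPolynomial (Fin l) k) :
    scaleJ J (algebraMap _ (RF k l) p) = toRatFuncHom k l (scaleAux k l J p) :=
  IsFractionRing.lift_algebraMap _ p

theorem aux_ratC {k : Type} [Field k] {l : ℕ} (c : k) (J : Finset (Fin l)) :
    scaleJ J (algebraMap k (RF k l) c) = RatFunc.C (algebraMap k (RF k l) c) := by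
  rw [← aux_algMap_C, scaleJ_alg]
  simp [toRatFuncHom, scaleAux, MvPolynomial.algebraMap_eq, Polynomial.algebraMap_apply]

theorem aux_ratz {k : Type} [Field k] {l : ℕ} (i : Fin l) (J : Finset (Fin l)) :
    scaleJ J (zv i : RF k l) = if i ∈ J then (RatFunc.X : RatFunc (RF k l)) * RatFunc.C (zv i : RF k l)
      else RatFunc.C (zv i : RF k l) := by
  rw [zv, scaleJ_alg]
  by_cases h : i ∈ J
  · simp [toRatFuncHom, scaleAux, h]; ring
  · simp [toRatFuncHom, scaleAux, h]

/-- homogeneity under arbitrary substitutions -/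
theorem aux_hom {k : Type} [Field k] {l : ℕ} {e : ℤ} {α : RF k l}
    (h : IsHomogeneousOn Finset.univ e α) {L : Type*} [Field L] (θ ψ : RF k l →+* L) (t : L)
    (ht : t ≠ 0) (hc : ∀ c : k, ψ (algebraMap k _ c) = θ (algebraMap k _ c))
    (hz : ∀ i, ψ (zv i) = t * θ (zv i)) : ψ α = t ^ e * θ α := by
  obtain ⟨P, Q, hQ, hα⟩ := aux_frac α
  obtain ⟨a, b, rfl⟩ : ∃ a b : ℕ, e = (b : ℤ) - a :=
    ⟨(-e).toNat, e.toNat, by omega⟩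
  let S : MvPolynomial (Fin l) k →+* Polynomial (RF k l) :=
    (Polynomial.mapRingHom (algebraMap (MvPolynomial (Fin l) k) (RF k l))).comp
      (scaleAux k l Finset.univ)
  have hS : ∀ p, scaleJ Finset.univ (algebraMap _ (RF k l) p) =
      algebraMap (Polynomial (RF k l)) (RatFunc (RF k l)) (S p) := by
    intro p
    rw [scaleJ_alg]; rfl
  have key : S P * Polynomial.X ^ a = Polynomial.X ^ b * Polynomial.C α * S Q := by
    apply IsFractionRing.injective (Polynomial (RF k l)) (RatFunc (RF k l))
    unfold IsHomogeneousOn at h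
    have hX : (RatFunc.X : RatFunc (RF k l)) ≠ 0 := RatFunc.X_ne_zero
    have h1 : scaleJ Finset.univ (algebraMap _ (RF k l) P) =
      scaleJ Finset.univ α * scaleJ Finset.univ (algebraMap _ (RF k l) Q) := by
      rw [← map_mul, hα, div_mul_cancel₀ _ hQ]
    rw [h, hS, hS, zpow_sub₀ hX] at h1
    simp only [map_mul, map_pow, RatFunc.algebraMap_X, RatFunc.algebraMap_C]
    rw [h1]
    simp only [zpow_natCast]
    field_simp
  have hE : ∀ p, Polynomial.eval₂RingHom θ t (S p) = ψ (algebraMap _ _ p) := by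
    intro p
    apply aux_poly_ext ((Polynomial.eval₂RingHom θ t).comp S) (ψ.comp (algebraMap _ _))
    · intro c
      simp [S, scaleAux, MvPolynomial.algebraMap_eq, Polynomial.algebraMap_apply, aux_algMap_C, hc]
    · intro i
      have := hz i
      simp only [zv] at this
      simp [S, scaleAux, this]; ring
  have k2 := congrArg (Polynomial.eval₂RingHom θ t) key
  simp only [map_mul, hE] at k2
  simp at k2
  have hψQ : ψ (algebraMap _ _ Q) ≠ 0 := by simpa using hQ
  rw [hα, map_div₀, ← hα, div_eq_iff hψQ, zpow_sub₀ ht, zpow_natCast, zpow_natCast]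
  field_simp
  linear_combination k2

/-- generic translation on polynomials -/
def trP (k : Type) [Field k] (l : ℕ) : MvPolynomial (Fin l) k →+* Polynomial (RF k l) :=
  (MvPolynomial.eval₂Hom (Polynomial.C.comp (algebraMap k (RF k l))) fun i =>
    Polynomial.C (zv i) + Polynomial.X)

theorem trP_eval {k : Type} [Field k] {l : ℕ} (c : k) (τ : RF k l →+* RF k l)
    (hτc : ∀ r, τ (algebraMap k _ r) = algebraMap k _ r)
    (hτ : ∀ i, τ (zv i) = zv i + algebraMap k _ c) (p : MvPolynomial (Fin l) k) :
    (trP k l p).eval (algebraMap k _ c) = τ (algebraMap _ _ p) := by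
  apply aux_poly_ext ((Polynomial.evalRingHom (algebraMap k _ c)).comp (trP k l))
    (τ.comp (algebraMap _ _))
  · intro r; simp [trP, aux_algMap_C, hτc]
  · intro i
    have := hτ i
    simp only [zv] at this
    simp [trP, this, zv]

theorem trP_eval_zero {k : Type} [Field k] {l : ℕ} (p : MvPolynomial (Fin l) k) :
    (trP k l p).eval 0 = algebraMap _ _ p := by
  have := trP_eval (0 : k) (RingHom.id (RF k l)) (by simp) (by simp) p
  simpa using this

theorem trP_deriv {k : Type} [Field k] {l : ℕ} (p : MvPolynomial (Fin l) k) :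
    (trP k l p).derivative = trP k l (∑ i, MvPolynomial.pderiv i p) := by
  induction p using MvPolynomial.induction_on with
  | C a => simp [trP]
  | add p q hp hq => simp only [map_add, hp, hq, Finset.sum_add_distrib]
  | mul_X p j hp =>
    simp only [Derivation.leibniz, smul_eq_mul, MvPolynomial.pderiv_X, Finset.sum_add_distrib,
      map_add, map_mul, Polynomial.derivative_mul, hp, ← Finset.mul_sum]
    have : (∑ i : Fin l, (Pi.single i 1 : Fin l → MvPolynomial (Fin l) k) j) = 1 := by
      simp [Pi.single_apply]
    rw [this]
    simp [trP]; ring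

theorem D_poly {k : Type} [Field k] {l : ℕ} (D : Fin l → Derivation k (RF k l) (RF k l))
    (hD : IsPartialDeriv D) (i : Fin l) (p : MvPolynomial (Fin l) k) :
    D i (algebraMap _ _ p) = algebraMap _ (RF k l) (MvPolynomial.pderiv i p) := by
  induction p using MvPolynomial.induction_on with
  | C a => rw [aux_algMap_C]; simp
  | add p q hp hq => simp only [map_add, hp, hq]
  | mul_X p j hp =>
    have := hD i j
    rw [zv] at this
    simp only [Derivation.leibniz, map_mul, hp, this, smul_eq_mul, MvPolynomial.pderiv_X, map_add]
    by_cases h : j = i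
    · subst h; simp
    · simp [h]

theorem aux_const {K : Type} [Field K] [CharZero K] (f g : Polynomial K) (hg : g.eval 0 ≠ 0)
    (h : f.derivative * g = f * g.derivative) : f = Polynomial.C (f.eval 0 / g.eval 0) * g := by
  have hg' : PowerSeries.constantCoeff (g : PowerSeries K) ≠ 0 := by
    rwa [Polynomial.constantCoeff_coe, Polynomial.coeff_zero_eq_eval_zero]
  have h2 : (f : PowerSeries K) * (g : PowerSeries K)⁻¹ = PowerSeries.C (f.eval 0 / g.eval 0) := by
    apply PowerSeries.derivative.ext
    · rw [Derivation.leibniz, PowerSeries.derivative_inv', PowerSeries.derivative_C,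
        PowerSeries.derivative_coe, PowerSeries.derivative_coe]
      simp only [smul_eq_mul]
      have h3 : (f.derivative : PowerSeries K) * g = f * g.derivative := by
        rw [← Polynomial.coe_mul, h, Polynomial.coe_mul]
      have h4 : (g : PowerSeries K) * (g : PowerSeries K)⁻¹ = 1 := PowerSeries.mul_inv_cancel _ hg'
      linear_combination (g : PowerSeries K)⁻¹ ^ 2 * h3 -
        (g : PowerSeries K)⁻¹ * (f.derivative : PowerSeries K) * h4
    · simp [Polynomial.coeff_zero_eq_eval_zero, div_eq_mul_inv]
  apply Polynomial.coe_injective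
  rw [Polynomial.coe_mul, Polynomial.coe_C, ← h2, mul_assoc, PowerSeries.inv_mul_cancel _ hg',
    mul_one]

theorem aux_shift {k : Type} [Field k] [CharZero k] {l : ℕ}
    (D : Fin l → Derivation k (RF k l) (RF k l)) (hD : IsPartialDeriv D)
    (β : RF k l) (h : ∑ i, D i β = 0) (c : k) (τ : RF k l →+* RF k l)
    (hτc : ∀ r, τ (algebraMap k _ r) = algebraMap k _ r)
    (hτ : ∀ i, τ (zv i) = zv i + algebraMap k _ c) : τ β = β := by
  have : CharZero (RF k l) := charZero_of_injective_algebraMap (algebraMap k (RF k l)).injective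
  obtain ⟨P, Q, hQ, hβ⟩ := aux_frac β
  have hP : algebraMap _ _ P = β * algebraMap _ _ Q := by rw [hβ, div_mul_cancel₀ _ hQ]
  have h1 : algebraMap _ (RF k l) (∑ i, MvPolynomial.pderiv i P) =
      β * algebraMap _ _ (∑ i, MvPolynomial.pderiv i Q) := by
    simp only [map_sum, ← D_poly D hD, hP, Derivation.leibniz, smul_eq_mul,
      Finset.sum_add_distrib, ← Finset.mul_sum, h]
    ring
  have h2 : (∑ i, MvPolynomial.pderiv i P) * Q = P * ∑ i, MvPolynomial.pderiv i Q := by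
    apply IsFractionRing.injective (MvPolynomial (Fin l) k) (RF k l)
    rw [map_mul, map_mul, h1, hP]; ring
  have h3 := aux_const (trP k l P) (trP k l Q) (by rwa [trP_eval_zero]) (by
    rw [trP_deriv, trP_deriv, ← map_mul, h2, map_mul])
  have h4 := congrArg (Polynomial.eval (algebraMap k _ c)) h3
  rw [Polynomial.eval_mul, Polynomial.eval_C, trP_eval_zero, trP_eval_zero, ← hβ,
    trP_eval c τ hτc hτ, trP_eval c τ hτc hτ] at h4
  have : τ (algebraMap _ _ Q) ≠ 0 := by simpa using hQ
  rw [hP, map_mul] at h4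
  exact mul_right_cancel₀ this h4

theorem aux_inv_deriv {k : Type} [Field k] {l : ℕ}
    (D : Fin l → Derivation k (RF k l) (RF k l)) (hD : IsPartialDeriv D)
    (ι : RF k l →+* RF k l) (hιc : ∀ c : k, ι (algebraMap k _ c) = algebraMap k _ c)
    (hι : ∀ i, ι (zv i) = (zv i)⁻¹) (x : RF k l) :
    ∑ i, D i (ι x) = - ι (∑ i, (zv i) ^ 2 * D i x) := by
  induction x using aux_induction with
  | hc c => simp [hιc]
  | hz j =>
    have h : ∀ i, D i (zv j) = if j = i then 1 else 0 := fun i => hD i j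
    simp [hι, Derivation.leibniz_inv, h]
  | hadd x y hx hy => simp only [map_add, mul_add, Finset.sum_add_distrib, hx, hy]; ring
  | hmul x y hx hy =>
    have : ∑ i, zv i ^ 2 * D i (x * y) = x * ∑ i, zv i ^ 2 * D i y + y * ∑ i, zv i ^ 2 * D i x := by
      rw [Finset.mul_sum, Finset.mul_sum, ← Finset.sum_add_distrib]
      refine Finset.sum_congr rfl fun i _ => ?_
      simp; ring
    rw [this]
    simp only [map_mul, map_add, Derivation.leibniz, smul_eq_mul, Finset.sum_add_distrib,
      ← Finset.mul_sum, hx, hy]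
    ring
  | hinv x hx =>
    have : ∑ i, zv i ^ 2 * D i (x⁻¹) = -x⁻¹ ^ 2 * ∑ i, zv i ^ 2 * D i x := by
      rw [Finset.mul_sum]
      refine Finset.sum_congr rfl fun i _ => ?_
      rw [Derivation.leibniz_inv, smul_eq_mul]; ring
    rw [this]
    simp only [map_inv₀, Derivation.leibniz_inv, smul_eq_mul, ← Finset.mul_sum, hx, map_mul,
      map_neg, map_pow]
    ring

theorem aux_D_prod {k : Type} [Field k] {l : ℕ}
    (D : Fin l → Derivation k (RF k l) (RF k l)) (hD : IsPartialDeriv D) (e : Fin l → ℤ)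
    (S : Finset (Fin l)) :
    ∑ i, D i (∏ j ∈ S, (zv j) ^ e j) =
      (∑ j ∈ S, (e j : RF k l) * (zv j)⁻¹) * ∏ j ∈ S, (zv j) ^ e j := by
  induction S using Finset.induction_on with
  | empty => simp
  | insert a S ha ih =>
    have h : ∀ i, D i (zv a) = if a = i then 1 else 0 := fun i => hD i a
    rw [Finset.prod_insert ha, Finset.sum_insert ha]
    simp only [Derivation.leibniz, smul_eq_mul, Finset.sum_add_distrib, ← Finset.mul_sum, ih,
      Derivation.leibniz_zpow, h]
    have hz : (zv a : RF k l) ≠ 0 := zv_ne_zero a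
    simp [zpow_sub_one₀ hz]
    ring

theorem aux_phi {k : Type} [Field k] {l : ℕ} (α : RF k l) (hΦ : α ∈ Phi k l) :
    ∃ F : Polynomial (RF k l), F.eval 0 = α ∧ ∀ (c : k) (τ : RF k l →+* RF k l),
      (∀ r, τ (algebraMap k _ r) = algebraMap k _ r) →
      (∀ i, τ (zv i) = zv i + algebraMap k _ c) → τ α = F.eval (algebraMap k _ c) := by
  obtain ⟨p, e, rfl⟩ := hΦ
  refine ⟨trP k l p * Polynomial.C (∏ i : Fin l, ∏ j : Fin l,
    (if i < j then (zv i - zv j) ^ e i j else 1)), ?_, ?_⟩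
  · rw [Polynomial.eval_mul, trP_eval_zero, Polynomial.eval_C]
  · intro c τ hc hτ
    rw [Polynomial.eval_mul, trP_eval c τ hc hτ, Polynomial.eval_C, map_mul]
    congr 1
    simp only [map_prod]
    refine Finset.prod_congr rfl fun i _ => Finset.prod_congr rfl fun j _ => ?_
    split_ifs
    · rw [map_zpow₀, map_sub, hτ, hτ]; congr 1; ring
    · simp

/-- coefficientwise map of Laurent series -/
def lmap {K : Type} [Field K] (f : K →+* K) : LaurentSeries K →+* LaurentSeries K where
  toFun x := x.map f
  map_zero' := by ext; simp
  map_one' := by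
    rw [← HahnSeries.C_one, HahnSeries.map_C, map_one]
  map_add' x y := by ext; simp
  map_mul' x y := by
    have hs : ∀ z : LaurentSeries K, (z.map f).support = z.support := by
      intro z; ext i; simp
    ext i
    rw [HahnSeries.map_coeff, HahnSeries.coeff_mul, HahnSeries.coeff_mul, map_sum]
    simp only [hs, HahnSeries.map_coeff, map_mul]

theorem lmap_coeff {K : Type} [Field K] (f : K →+* K) (x : LaurentSeries K) (i : ℤ) :
    (lmap f x).coeff i = f (x.coeff i) := rfl

theorem lmap_single {K : Type} [Field K] (f : K →+* K) (a : K) (i : ℤ) :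
    lmap f (HahnSeries.single i a) = HahnSeries.single i (f a) :=
  HahnSeries.map_single (f := (f : ZeroHom K K))

open scoped RatFunc in
/-- the coercion -/
def rcoe (K : Type) [Field K] : RatFunc K →+* LaurentSeries K :=
  algebraMap (RatFunc K) (LaurentSeries K)

theorem rcoe_X {K : Type} [Field K] : rcoe K RatFunc.X = HahnSeries.single 1 1 := RatFunc.coe_X

theorem rcoe_C {K : Type} [Field K] (a : K) : rcoe K (RatFunc.C a) = HahnSeries.single 0 a := by
  have := RatFunc.coe_coe (Polynomial.C a)
  simp at this
  exact this.symm

theorem lcoeff_rcoe {K : Type} [Field K] (m : ℤ) (f : RatFunc K) :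
    lcoeff m f = (rcoe K f).coeff m := rfl

theorem aux_zpow_sum {K ι : Type*} [Field K] (a : K) (ha : a ≠ 0) (S : Finset ι) (f : ι → ℤ) :
    ∏ i ∈ S, a ^ f i = a ^ ∑ i ∈ S, f i := by
  induction S using Finset.induction_on with
  | empty => simp
  | insert i S hi ih => rw [Finset.prod_insert hi, Finset.sum_insert hi, ih, zpow_add₀ ha]

/-- the functional equation -/
theorem aux_main {k : Type} [Field k] [CharZero k] {l : ℕ}
    (D : Fin l → Derivation k (RF k l) (RF k l)) (hD : IsPartialDeriv D)
    (d : Fin l → ℤ) (α : RF k l) (hΦ : α ∈ Phi k l)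
    (hreg : DeltaStar D (fun i => 2 * d i) α = 0)
    (hhom : IsHomogeneousOn Finset.univ (-(∑ i, d i)) α)
    (ι : RF k l →+* RF k l) (hιc : ∀ c : k, ι (algebraMap k _ c) = algebraMap k _ c)
    (hι : ∀ i, ι (zv i) = (zv i)⁻¹) :
    α = (-1) ^ (∑ i, d i) * (∏ i, (zv i) ^ (-(2 * d i))) * ι α := by
  have hch : CharZero (RF k l) := charZero_of_injective_algebraMap (algebraMap k (RF k l)).injective
  set m : RF k l := ∏ i, (zv i) ^ (-(2 * d i)) with hm
  set s : ℤ := ∑ i, d i with hs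
  set β : RF k l := m * ι α with hβ
  have hz0 : ∀ i, (zv i : RF k l) ≠ 0 := zv_ne_zero
  have hm0 : m ≠ 0 := Finset.prod_ne_zero_iff.2 fun i _ => zpow_ne_zero _ (hz0 i)
  have hιι : ∀ x, ι (ι x) = x := by
    intro x
    have : ι.comp ι = RingHom.id _ := aux_ext _ _ (by simp [hιc]) (by simp [hι])
    exact DFunLike.congr_fun this x
  have hιm : ι m = m⁻¹ := by
    simp [hm, map_prod, hι]
  have hαβ : α = m * ι β := by
    rw [hβ, map_mul, hιι, hιm, mul_inv_cancel_left₀ hm0]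
  have hΔ : ∑ i, D i β = 0 := by
    have h1 : ∑ i, D i β = m * (∑ i, D i (ι α)) + ι α * ∑ i, D i m := by
      simp only [hβ, Derivation.leibniz, smul_eq_mul, Finset.sum_add_distrib, Finset.mul_sum]
    rw [h1, aux_inv_deriv D hD ι hιc hι, hm, aux_D_prod D hD, ← hm]
    have h2 := congrArg ι hreg
    simp only [DeltaStar, Finset.sum_add_distrib, map_add, map_zero] at h2
    have h3 : ι (∑ i, ((2 * d i : ℤ) : RF k l) * zv i * α) =
        - (∑ j, ((-(2 * d j) : ℤ) : RF k l) * (zv j)⁻¹) * ι α := by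
      rw [← Finset.sum_mul, map_mul, map_sum, ← Finset.sum_neg_distrib]
      congr 1
      refine Finset.sum_congr rfl fun i _ => ?_
      rw [map_mul, hι, map_intCast]; push_cast; ring
    rw [h3] at h2
    linear_combination (-m) * h2
  obtain ⟨F, hF0, hF⟩ := aux_phi α hΦ
  have key : ∀ c : k, c ≠ 0 → F.eval (algebraMap k _ c) =
      (-1) ^ s * m * ι (F.eval (algebraMap k _ c⁻¹)) := by
    intro c hc
    obtain ⟨τ, hτc, hτ⟩ := exists_aff l 1 c one_ne_zero
    obtain ⟨τ', hτ'c, hτ'⟩ := exists_aff l 1 (c⁻¹) one_ne_zero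
    obtain ⟨τm, hτmc, hτm⟩ := exists_aff l 1 (-c) one_ne_zero
    have hcc : -(c^2) ≠ 0 := neg_ne_zero.2 (pow_ne_zero _ hc)
    obtain ⟨σ, hσc, hσ⟩ := exists_aff l (-(c^2)) 0 hcc
    simp only [map_one, one_mul] at hτ hτ' hτm
    simp only [map_zero, add_zero] at hσ
    rw [← hF c τ hτc hτ, ← hF c⁻¹ τ' hτ'c hτ']
    have hβm : τm β = β := aux_shift D hD β hΔ (-c) τm hτmc hτm
    set C : RF k l := algebraMap k _ c with hC
    have hC0 : C ≠ 0 := by simpa [hC] using hc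
    have hC' : algebraMap k (RF k l) c⁻¹ = C⁻¹ := by rw [map_inv₀]
    have hCm : algebraMap k (RF k l) (-c) = -C := by rw [map_neg]
    have hC2 : algebraMap k (RF k l) (-(c^2)) = -C^2 := by rw [map_neg, map_pow]
    rw [hC'] at hτ'
    rw [hCm] at hτm
    rw [hC2] at hσ
    have hC20 : -C^2 ≠ 0 := by simpa using hC0
    have hτz0 : ∀ i, (zv i + C : RF k l) ≠ 0 := by
      intro i; rw [← hτ]; simpa using hz0 i
    have hτc' : τ C = C := hτc c
    have hιC : ι C = C := hιc c
    have hτ'C : τ' C = C := hτ'c c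
    -- the hom identity
    have hcomp : (ι.comp (τ'.comp (ι.comp τm))) = τ.comp (ι.comp σ) := by
      apply aux_ext
      · intro r; simp [hιc, hτc, hτ'c, hτmc, hσc]
      · intro i
        have h1 := hz0 i
        have h2 := hτz0 i
        have h3 : C + zv i ≠ 0 := by rwa [add_comm]
        have h4 : (zv i)⁻¹ + C⁻¹ ≠ 0 := by
          have : (zv i)⁻¹ + C⁻¹ = (zv i + C) / (zv i * C) := by field_simp; ring
          rw [this]; exact div_ne_zero h2 (mul_ne_zero h1 hC0)
        simp only [RingHom.comp_apply, hτm, hσ, map_add, map_neg, map_mul, map_pow, hι, hιC, hτ'C,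
          hτc', map_inv₀, hτ, hτ']
        have : ((zv i)⁻¹ + C⁻¹)⁻¹ = (zv i * C) / (zv i + C) := by
          rw [inv_eq_iff_eq_inv, inv_div]; field_simp; ring
        rw [this]
        field_simp
        ring
    have hσβ : σ β = (-C^2) ^ (-s) * β := by
      have h1 : σ m = (-C^2) ^ (-(2 * s)) * m := by
        simp only [hm, map_prod, map_zpow₀, hσ, mul_zpow, Finset.prod_mul_distrib]
        congr 1
        rw [hs, Finset.mul_sum, ← Finset.sum_neg_distrib]
        exact aux_zpow_sum _ hC20 _ _
      have h2 := aux_hom hhom ι (σ.comp ι) (-C^2)⁻¹ (inv_ne_zero hC20)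
        (by intro r; simp [hιc, hσc])
        (by intro i; simp only [RingHom.comp_apply, hι, map_inv₀, hσ, mul_inv])
      rw [RingHom.comp_apply] at h2
      rw [hβ, map_mul, h1, h2, inv_zpow', neg_neg]
      have : (-C^2) ^ (-s) = (-C^2) ^ (-(2 * s)) * (-C^2) ^ s := by
        rw [← zpow_add₀ hC20]; congr 1; ring
      rw [this]; ring
    have h5 : ι (τ' (ι β)) = (-C^2) ^ (-s) * τ (ι β) := by
      have := DFunLike.congr_fun hcomp β
      simp only [RingHom.comp_apply] at this
      rw [hβm, hσβ] at this
      rw [this]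
      simp only [map_mul, map_zpow₀, map_neg, map_pow, hιC, hτc']
    have h6 : m * ι (τ' m) = C ^ (2 * s) * τ m := by
      have : C ^ (2 * s) = ∏ i, C ^ (2 * d i) := by
        rw [hs, Finset.mul_sum]; exact (aux_zpow_sum _ hC0 _ _).symm
      rw [this]
      simp only [hm, map_prod, map_zpow₀, hτ', hτ, map_add, hι, map_inv₀, hιC,
        ← Finset.prod_mul_distrib]
      refine Finset.prod_congr rfl fun i _ => ?_
      have h1 := hz0 i
      have h10 : C ^ (2 * d i) = C⁻¹ ^ (-(2 * d i)) := by rw [inv_zpow', neg_neg]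
      rw [h10, ← mul_zpow, ← mul_zpow]
      congr 1
      field_simp
      try ring
    have h7 : (-1 : RF k l) ^ s * C ^ (2 * s) * (-C^2) ^ (-s) = 1 := by
      have : (-C^2) = (-1) * C^2 := by ring
      rw [this, mul_zpow, zpow_mul]
      have e1 : (-1 : RF k l) ^ s * (-1) ^ (-s) = 1 := by
        rw [← zpow_add₀ (by simp)]; simp
      have e2 : (C ^ (2:ℤ)) ^ s * (C ^ 2) ^ (-s) = 1 := by
        have : C ^ (2:ℤ) = C ^ 2 := by norm_cast
        rw [this, ← zpow_add₀ (pow_ne_zero _ hC0)]; simp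
      linear_combination (C ^ (2:ℤ)) ^ s * (C ^ 2) ^ (-s) * e1 + e2
    have h8 : τ α = τ m * τ (ι β) := by rw [← map_mul, ← hαβ]
    have h9 : ι (τ' α) = ι (τ' m) * ι (τ' (ι β)) := by rw [← map_mul, ← map_mul, ← hαβ]
    rw [h8, h9, h5]
    linear_combination (-(τ m * τ (ι β))) * h7 - ((-1) ^ s * (-C^2) ^ (-s) * τ (ι β)) * h6
  -- compare polynomials
  set M := F.natDegree with hM
  let G : Polynomial (RF k l) := F.map ι
  have hG : ∀ c : k, ι (F.eval (algebraMap k _ c)) = G.eval (algebraMap k _ c) := by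
    intro c
    rw [← hιc c, Polynomial.eval_map_apply, hιc]
  have hd : G.natDegree = M := Polynomial.natDegree_map _
  have hpoly : F * Polynomial.X ^ M = Polynomial.C ((-1) ^ s * m) * G.reverse := by
    apply Polynomial.eq_of_infinite_eval_eq
    refine Set.Infinite.mono (s := (algebraMap k (RF k l)) '' {0}ᶜ) ?_ ?_
    · rintro _ ⟨c, hc, rfl⟩
      have hc : c ≠ 0 := hc
      have hC0 : algebraMap k (RF k l) c ≠ 0 := by simpa using hc
      have hC0' : (algebraMap k (RF k l) c)⁻¹ ≠ 0 := inv_ne_zero hC0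
      letI := invertibleOfNonzero hC0'
      have h1 := Polynomial.eval₂_reverse_mul_pow (RingHom.id (RF k l)) (algebraMap k _ c)⁻¹ G
      rw [invOf_eq_inv, inv_inv, hd, Polynomial.eval₂_id, Polynomial.eval₂_id] at h1
      have h2 := key c hc
      rw [hG, map_inv₀, ← h1] at h2
      simp only [Set.mem_setOf_eq, Polynomial.eval_mul, Polynomial.eval_pow, Polynomial.eval_X,
        Polynomial.eval_C]
      rw [h2, inv_pow]
      field_simp
    · exact (Set.Infinite.image (algebraMap k (RF k l)).injective.injOn
        (Set.Finite.infinite_compl (Set.finite_singleton 0)))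
  have h0 := congrArg (fun p => Polynomial.coeff p M) hpoly
  simp only [Polynomial.coeff_C_mul, Polynomial.coeff_reverse, hd] at h0
  rw [Polynomial.revAt_le le_rfl, Nat.sub_self] at h0
  have h1 : (F * Polynomial.X ^ M).coeff M = F.coeff 0 := by
    simpa using Polynomial.coeff_mul_X_pow F M 0
  rw [h1, Polynomial.coeff_map, Polynomial.coeff_zero_eq_eval_zero, hF0] at h0
  exact h0

theorem aux_component {k : Type} [Field k] {l : ℕ}
    (d : Fin l → ℤ) (I J : Finset (Fin l)) (hdisj : Disjoint I J)
    (hcover : I ∪ J = Finset.univ) (α : RF k l)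
    (hhom : IsHomogeneousOn Finset.univ (-(∑ i, d i)) α) (n : ℤ)
    (ι : RF k l →+* RF k l) (hιc : ∀ c : k, ι (algebraMap k _ c) = algebraMap k _ c)
    (hι : ∀ i, ι (zv i) = (zv i)⁻¹)
    (hα : α = (-1) ^ (∑ i, d i) * (∏ i, (zv i) ^ (-(2 * d i))) * ι α) :
    component I d n α =
      (-1) ^ (∑ i, d i) * (∏ i, (zv i) ^ (-(2 * d i))) * ι (component J d n α) := by
  set m : RF k l := ∏ i, (zv i) ^ (-(2 * d i)) with hm
  set s : ℤ := ∑ i, d i with hs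
  set x : LaurentSeries (RF k l) := HahnSeries.single 1 1 with hx
  have hx0 : x ≠ 0 := by simp [hx]
  have hzC : ∀ i, (HahnSeries.C (zv i : RF k l) : LaurentSeries (RF k l)) ≠ 0 := by
    intro i; simpa using zv_ne_zero i
  have hrC : ∀ a : RF k l, rcoe (RF k l) (RatFunc.C a) = HahnSeries.C a := rcoe_C
  have hrX : rcoe (RF k l) RatFunc.X = x := rcoe_X
  have hlC : ∀ a : RF k l, lmap ι (HahnSeries.C a) = HahnSeries.C (ι a) :=
    fun a => lmap_single ι a 0
  have hlX : lmap ι x = x := by rw [hx, lmap_single, map_one]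
  have h1 := aux_hom hhom ((lmap ι).comp ((rcoe (RF k l)).comp (scaleJ J)))
    ((rcoe (RF k l)).comp ((scaleJ I).comp ι)) x⁻¹ (inv_ne_zero hx0)
    (by
      intro c
      simp only [RingHom.comp_apply, hιc, aux_ratC, hrC, hlC])
    (by
      intro i
      simp only [RingHom.comp_apply, hι, map_inv₀, aux_ratz]
      have hi : i ∈ I ∪ J := hcover ▸ Finset.mem_univ i
      by_cases hI : i ∈ I
      · have hJ : i ∉ J := Finset.disjoint_left.1 hdisj hI
        simp only [hI, hJ, if_true, if_false, map_mul, hrC, hrX, hlC, hι, map_inv₀, mul_inv]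
      · have hJ : i ∈ J := by simpa [hI] using hi
        simp only [hI, hJ, if_true, if_false, map_mul, hrC, hrX, hlC, hlX, hι, map_inv₀]
        rw [inv_mul_cancel_left₀ hx0])
  simp only [RingHom.comp_apply] at h1
  have h2 : rcoe (RF k l) (scaleJ I m) = x ^ (-(2 * ∑ i ∈ I, d i)) * HahnSeries.C m := by
    have : ∀ i, rcoe (RF k l) (scaleJ I (zv i)) = (if i ∈ I then x else 1) * HahnSeries.C (zv i) := by
      intro i
      rw [aux_ratz]
      split_ifs
      · rw [map_mul, hrX, hrC]
      · rw [hrC, one_mul]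
    simp only [hm, map_prod, map_zpow₀, this, mul_zpow, Finset.prod_mul_distrib]
    congr 1
    rw [Finset.mul_sum, ← Finset.sum_neg_distrib, ← aux_zpow_sum x hx0]
    rw [← Finset.univ_inter I, ← Finset.prod_ite_mem, Finset.univ_inter]
    refine Finset.prod_congr rfl fun i _ => ?_
    split_ifs <;> simp
  have h3 : rcoe (RF k l) (scaleJ I α) = HahnSeries.C ((-1) ^ s * m) *
      (HahnSeries.single (s - 2 * ∑ i ∈ I, d i) 1 * lmap ι (rcoe (RF k l) (scaleJ J α))) := by
    conv_lhs => rw [hα]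
    rw [map_mul, map_mul, map_mul, map_mul, h1, h2, RatFunc.single_zpow, ← hx, inv_zpow', neg_neg,
      sub_eq_add_neg, zpow_add₀ hx0]
    simp only [map_zpow₀, map_neg, map_one, map_mul]
    ring
  have hsum : s = ∑ i ∈ I, d i + ∑ i ∈ J, d i := by
    rw [hs, ← hcover, Finset.sum_union hdisj]
  rw [component, component, lcoeff_rcoe, lcoeff_rcoe, h3, HahnSeries.C_mul_eq_smul,
    HahnSeries.coeff_smul, HahnSeries.coeff_single_mul, lmap_coeff, one_mul, smul_eq_mul]
  have hidx : n - ∑ i ∈ I, d i - (s - 2 * ∑ i ∈ I, d i) = n - ∑ i ∈ J, d i := by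
    rw [hsum]; ring
  rw [hidx]

theorem aux_dep {k : Type} [Field k] {l : ℕ} (S : Finset (Fin l)) (f g : RF k l →+* RF k l)
    (hc : ∀ c : k, f (algebraMap k _ c) = g (algebraMap k _ c))
    (hz : ∀ i ∈ S, f (zv i) = g (zv i)) (x : RF k l) (hx : dependsOnlyOn S x) : f x = g x := by
  unfold dependsOnlyOn at hx
  induction hx using Subfield.closure_induction with
  | mem x hx =>
    rcases hx with ⟨c, rfl⟩ | ⟨i, hi, rfl⟩
    · exact hc c
    · exact hz i hi
  | one => simp
  | add x y _ _ hx hy => simp [hx, hy]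
  | neg x _ hx => simp [hx]
  | inv x _ hx => simp [hx]
  | mul x y _ _ hx hy => simp [hx, hy]

end Griess

namespace Griess

/-- let `α ∈ Φ^l` be `(2d₁,…,2d_l)`-regular and homogeneous of degree
`-(d₁+⋯+d_l)`.  If the component of degree `n` of `α` with respect to the partition
`(I,J)` is written as `(α)_n = Σ_j α'_j·α''_j` with `α''_j ∈ Φ` a rational function of
the `J`-variables homogeneous of degree `n - Σ_{j∈J}d_j` and `α'_j` a rational function
of the `I`-variables homogeneous of degree `-n - Σ_{i∈I}d_i`, then the component of
degree `n` of `α` with respect to the swapped partition `(J,I)` equals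
`Σ_j (α''_j)*·(α'_j)*`, where `β* = (-1)^{Σ_{i∈S}dᵢ}·(∏_{i∈S}z_i^{-2dᵢ})·β(z↦z⁻¹ on S)`
(the inversions of the `S`-variables being expressed by the homomorphisms `ιI`, `ιJ`). -/
theorem statement3 {k : Type} [Field k] [CharZero k] {l : ℕ}
    (D : Fin l → Derivation k (RF k l) (RF k l)) (hD : IsPartialDeriv D)
    (d : Fin l → ℤ) (I J : Finset (Fin l)) (hdisj : Disjoint I J)
    (hcover : I ∪ J = Finset.univ)
    (α : RF k l) (hΦ : α ∈ Phi k l)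
    (hreg : DeltaStar D (fun i => 2 * d i) α = 0)
    (hhom : IsHomogeneousOn Finset.univ (-(∑ i, d i)) α)
    (n : ℤ) (N : ℕ) (a' a'' : Fin N → RF k l)
    (hdecomp : component J d n α = ∑ j, a' j * a'' j)
    (ha'dep : ∀ j, dependsOnlyOn I (a' j))
    (ha'hom : ∀ j, IsHomogeneousOn I (-n - ∑ i ∈ I, d i) (a' j))
    (ha''Φ : ∀ j, a'' j ∈ Phi k l)
    (ha''dep : ∀ j, dependsOnlyOn J (a'' j))
    (ha''hom : ∀ j, IsHomogeneousOn J (n - ∑ i ∈ J, d i) (a'' j))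
    (ιI ιJ : RF k l →+* RF k l)
    (hιI : ∀ i, ιI (zv i) = if i ∈ I then (zv i)⁻¹ else zv i)
    (hιIc : ∀ c : k, ιI (algebraMap k (RF k l) c) = algebraMap k (RF k l) c)
    (hιJ : ∀ i, ιJ (zv i) = if i ∈ J then (zv i)⁻¹ else zv i)
    (hιJc : ∀ c : k, ιJ (algebraMap k (RF k l) c) = algebraMap k (RF k l) c) :
    component I d n α =
      ∑ j, (((-1 : RF k l) ^ (∑ i ∈ J, d i)) * (∏ i ∈ J, (zv i) ^ (-(2 * d i))) * ιJ (a'' j)) *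
        (((-1 : RF k l) ^ (∑ i ∈ I, d i)) * (∏ i ∈ I, (zv i) ^ (-(2 * d i))) * ιI (a' j)) := by
  have hmem : ∀ i, i ∈ I ∨ i ∈ J := by
    intro i
    rw [← Finset.mem_union, hcover]; exact Finset.mem_univ i
  have hnJ : ∀ i ∈ I, i ∉ J := fun i hi => Finset.disjoint_left.1 hdisj hi
  have hnI : ∀ i ∈ J, i ∉ I := fun i hi => Finset.disjoint_right.1 hdisj hi
  have hιc : ∀ c : k, (ιI.comp ιJ) (algebraMap k (RF k l) c) = algebraMap k (RF k l) c := by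
    intro c; rw [RingHom.comp_apply, hιJc, hιIc]
  have hι : ∀ i, (ιI.comp ιJ) (zv i) = (zv i)⁻¹ := by
    intro i
    rw [RingHom.comp_apply, hιJ]
    rcases hmem i with h | h
    · rw [if_neg (hnJ i h), hιI, if_pos h]
    · rw [if_pos h, map_inv₀, hιI, if_neg (hnI i h)]
  have h1 := aux_main D hD d α hΦ hreg hhom (ιI.comp ιJ) hιc hι
  rw [aux_component d I J hdisj hcover α hhom n (ιI.comp ιJ) hιc hι h1, hdecomp, map_sum,
    Finset.mul_sum]
  refine Finset.sum_congr rfl fun j _ => ?_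
  have e1 : (ιI.comp ιJ) (a' j) = ιI (a' j) :=
    aux_dep I _ _ (fun c => by rw [hιc, hιIc])
      (fun i hi => by rw [hι, hιI, if_pos hi]) _ (ha'dep j)
  have e2 : (ιI.comp ιJ) (a'' j) = ιJ (a'' j) :=
    aux_dep J _ _ (fun c => by rw [hιc, hιJc])
      (fun i hi => by rw [hι, hιJ, if_pos hi]) _ (ha''dep j)
  have hs : ∑ i, d i = ∑ i ∈ I, d i + ∑ i ∈ J, d i := by
    rw [← hcover, Finset.sum_union hdisj]
  have hp : (∏ i, (zv i : RF k l) ^ (-(2 * d i))) =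
      (∏ i ∈ I, (zv i) ^ (-(2 * d i))) * ∏ i ∈ J, (zv i) ^ (-(2 * d i)) := by
    rw [← hcover, Finset.prod_union hdisj]
  rw [map_mul, e1, e2, hs, hp, zpow_add₀ (by simp)]
  ring

end Griess
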